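/- A triangulation of the non-orientable surface of genus 3 (Euler characteristic -1) has at least 9 vertices. -/

import Mathlib

/-- A finite combinatorial closed surface (triangulation of a closed surface):
a nonempty finite family of 3-element faces on a finite vertex set such that every
edge lies in exactly two faces, every vertex lies in a face, the surface is connected,
and the link of every vertex is connected (together with the edge condition this makes
every vertex link a single cycle, so the underlying space is a closed surface). -/
structure CombClosedSurface (V : Type*) [DecidableEq V] [Fintype V] where
  faces : Finset (Finset V)
  faces_nonempty : faces.Nonempty
  face_card : ∀ t ∈ faces, t.card = 3
  edge_in_two_faces : ∀ e : Finset V, e.card = 2 → (∃ t ∈ faces, e ⊆ t) →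
    (faces.filter fun t => e ⊆ t).card = 2
  vertex_in_face : ∀ v : V, ∃ t ∈ faces, v ∈ t
  connected : (SimpleGraph.fromRel fun u w => ∃ t ∈ faces, u ∈ t ∧ w ∈ t).Connected
  link_connected : ∀ v : V,
    ((SimpleGraph.fromRel fun u w => insert v ({u, w} : Finset V) ∈ faces).induce
      {u : V | u ≠ v ∧ ∃ t ∈ faces, v ∈ t ∧ u ∈ t}).Connected

/-- The edges of a combinatorial closed surface: the 2-element vertex sets contained
in some face. -/
def CombClosedSurface.edgeSet {V : Type*} [DecidableEq V] [Fintype V]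
    (S : CombClosedSurface V) : Finset (Finset V) :=
  (Finset.powersetCard 2 (Finset.univ : Finset V)).filter fun e => ∃ t ∈ S.faces, e ⊆ t

/-- An orientation of a combinatorial closed surface: a choice, for every face, of a
cyclic order of its three vertices (encoded by the successor map `o t`), such that two
distinct faces sharing an edge induce opposite directions on that edge. -/
def CombClosedSurface.IsOrientation {V : Type*} [DecidableEq V] [Fintype V]
    (S : CombClosedSurface V) (o : Finset V → V → V) : Prop :=
  (∀ t ∈ S.faces, ∀ v ∈ t, o t v ∈ t) ∧
  (∀ t ∈ S.faces, ∀ v ∈ t, o t v ≠ v) ∧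
  (∀ t ∈ S.faces, ∀ v ∈ t, o t (o t v) ≠ v) ∧
  (∀ t ∈ S.faces, ∀ v ∈ t, o t (o t (o t v)) = v) ∧
  (∀ t ∈ S.faces, ∀ t' ∈ S.faces, t ≠ t' →
    ∀ u v : V, u ∈ t → u ∈ t' → v ∈ t → v ∈ t' → o t u = v → o t' v = u)

/-- A combinatorial closed surface is orientable if it admits an orientation. -/
def CombClosedSurface.Orientable {V : Type*} [DecidableEq V] [Fintype V]
    (S : CombClosedSurface V) : Prop :=
  ∃ o : Finset V → V → V, S.IsOrientation o

/-!
By Heawood's inequality a surface of negative Euler characteristic with at most eight vertices has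
exactly eight vertices and `27` edges, so its 1-skeleton is `K₈` minus one edge `ab`. The link of
`a` is then a hexagon on the six remaining vertices. Counting, for each type of edge, the two faces
through it gives linear equations for the possible faces, while a vertex link, being a single cycle
on at least six vertices, contains neither a 3-cycle nor a 4-cycle. Summed over the hexagon, these
constraints make both triangles of alternate hexagon vertices faces and leave exactly one short
diagonal of each parity in the link of `b`; no position of these two diagonals is possible.
-/

/-- The edges of `G`, if any, form a single cycle; vertices outside `G.support` are ignored, so that
the link of a vertex can be a graph on all of `V`. -/
structure IsSingleCycle {V : Type*} (G : SimpleGraph V) : Prop where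
  isCycles : G.IsCycles
  reachable : ∀ x ∈ G.support, ∀ y ∈ G.support, G.Reachable x y

namespace IsSingleCycle

variable {V : Type*} {G : SimpleGraph V}

theorem support_subset_of_forall_two_adj (hG : IsSingleCycle G) {s : Set V} (hs : s.Nonempty)
    (hadj : ∀ x ∈ s, ∃ y ∈ s, ∃ z ∈ s, y ≠ z ∧ G.Adj x y ∧ G.Adj x z) : G.support ⊆ s := by
  have neighborSet_subset : ∀ x ∈ s, G.neighborSet x ⊆ s := by
    intro x hx
    obtain ⟨y, hy, z, hz, hyz, hxy, hxz⟩ := hadj x hx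
    have hcard : (G.neighborSet x).ncard = 2 := hG.isCycles ⟨y, hxy⟩
    have heq : {y, z} = G.neighborSet x :=
      Set.eq_of_subset_of_ncard_le (Set.pair_subset hxy hxz)
        (by rw [hcard, Set.ncard_pair hyz]) (Set.finite_of_ncard_pos (by omega))
    exact heq ▸ Set.pair_subset hy hz
  have mem_of_walk {x y : V} (w : G.Walk x y) : x ∈ s → y ∈ s := by
    induction w with
    | nil => exact id
    | cons hxy _ ih => exact fun hx => ih (neighborSet_subset _ hx hxy)
  obtain ⟨x, hx⟩ := hs
  obtain ⟨y, -, -, -, -, hxy, -⟩ := hadj x hx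
  intro z hz
  obtain ⟨w⟩ := hG.reachable x ⟨y, hxy⟩ z hz
  exact mem_of_walk w hx

theorem ncard_support_le_three (hG : IsSingleCycle G) {x y z : V} (hxy : G.Adj x y)
    (hyz : G.Adj y z) (hzx : G.Adj z x) : G.support.ncard ≤ 3 := by
  classical
  have hsub : G.support ⊆ ({x, y, z} : Finset V) := by
    refine hG.support_subset_of_forall_two_adj ⟨x, by simp⟩ fun u hu => ?_
    obtain rfl | rfl | rfl : u = x ∨ u = y ∨ u = z := by simpa using hu
    · exact ⟨y, by simp, z, by simp, hyz.ne, hxy, hzx.symm⟩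
    · exact ⟨x, by simp, z, by simp, hzx.ne', hxy.symm, hyz⟩
    · exact ⟨x, by simp, y, by simp, hxy.ne, hzx, hyz.symm⟩
  have hcard := Set.ncard_le_ncard hsub (Finset.finite_toSet _)
  rw [Set.ncard_coe_finset] at hcard
  exact hcard.trans Finset.card_le_three

theorem ncard_support_le_four (hG : IsSingleCycle G) {w x y z : V} (hwy : w ≠ y) (hxz : x ≠ z)
    (hwx : G.Adj w x) (hxy : G.Adj x y) (hyz : G.Adj y z) (hzw : G.Adj z w) :
    G.support.ncard ≤ 4 := by
  classical
  have hsub : G.support ⊆ ({w, x, y, z} : Finset V) := by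
    refine hG.support_subset_of_forall_two_adj ⟨w, by simp⟩ fun u hu => ?_
    obtain rfl | rfl | rfl | rfl : u = w ∨ u = x ∨ u = y ∨ u = z := by simpa using hu
    · exact ⟨x, by simp, z, by simp, hxz, hwx, hzw.symm⟩
    · exact ⟨w, by simp, y, by simp, hwy, hwx.symm, hxy⟩
    · exact ⟨x, by simp, z, by simp, hxz, hxy.symm, hyz⟩
    · exact ⟨w, by simp, y, by simp, hwy, hzw, hyz.symm⟩
  have hcard := Set.ncard_le_ncard hsub (Finset.finite_toSet _)
  rw [Set.ncard_coe_finset] at hcard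
  exact hcard.trans Finset.card_le_four

theorem exists_isCycle_verts_eq_support [Finite V] (hG : IsSingleCycle G)
    (hne : G.support.Nonempty) :
    ∃ (x : V) (p : G.Walk x x), p.IsCycle ∧ p.toSubgraph.verts = G.support := by
  obtain ⟨x, y, hxy⟩ := hne
  obtain ⟨p, hp, hverts⟩ := hG.isCycles.exists_cycle_toSubgraph_verts_eq_connectedComponentSupp
    (c := G.connectedComponentMk x) rfl ⟨y, hxy⟩
  refine ⟨x, p, hp, subset_antisymm (fun z hz => ?_) (fun z hz => ?_)⟩
  · rw [SimpleGraph.Walk.mem_verts_toSubgraph,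
      SimpleGraph.Walk.mem_support_iff_exists_mem_edges_of_not_nil hp.not_nil] at hz
    obtain ⟨e, he, hze⟩ := hz
    obtain ⟨w, rfl⟩ := Sym2.mem_iff_exists.1 hze
    exact ⟨w, p.adj_of_mem_edges he⟩
  · rw [hverts]
    exact SimpleGraph.ConnectedComponent.sound (hG.reachable z hz x ⟨y, hxy⟩)

theorem exists_cyclic_enumeration [Finite V] (hG : IsSingleCycle G) {n : ℕ} [NeZero n]
    (hn : G.support.ncard = n) :
    ∃ f : Fin n → V, f.Injective ∧ Set.range f = G.support ∧ ∀ i, G.Adj (f i) (f (i + 1)) := by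
  obtain ⟨x, p, hp, hverts⟩ := hG.exists_isCycle_verts_eq_support
    (Set.nonempty_of_ncard_ne_zero (hn ▸ NeZero.ne n))
  have hpos : 0 < p.length := hp.three_le_length.trans_lt' (by norm_num)
  let f : Fin p.length → V := fun i => p.getVert i
  have hf : f.Injective := fun i j hij =>
    Fin.ext (hp.getVert_injOn' (Nat.le_sub_one_of_lt i.2) (Nat.le_sub_one_of_lt j.2) hij)
  have hrange : Set.range f = G.support := by
    ext z
    rw [← hverts, SimpleGraph.Walk.mem_verts_toSubgraph,
      SimpleGraph.Walk.mem_support_iff_exists_getVert]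
    constructor
    · rintro ⟨i, rfl⟩
      exact ⟨i, rfl, i.2.le⟩
    · rintro ⟨k, rfl, hk⟩
      obtain hk | rfl := hk.lt_or_eq
      · exact ⟨⟨k, hk⟩, rfl⟩
      · exact ⟨⟨0, hpos⟩, by simp [f]⟩
  obtain rfl : p.length = n := by
    rw [← hn, ← hrange, Set.ncard_range_of_injective hf, Nat.card_fin]
  refine ⟨f, hf, hrange, fun i => ?_⟩
  obtain hi | hi : (i : ℕ) + 1 < p.length ∨ (i : ℕ) + 1 = p.length := by omega
  · simpa only [f, Fin.val_add_one_of_lt' hi] using p.adj_getVert_succ i.2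
  · have hsucc : f (i + 1) = p.getVert (i + 1) := by
      have hval : ((i + 1 : Fin p.length) : ℕ) = 0 := by
        rw [Fin.val_add, Fin.val_one', Nat.add_mod_mod, hi, Nat.mod_self]
      simp only [f, hval, hi, p.getVert_zero, p.getVert_length]
    rw [hsucc]
    exact p.adj_getVert_succ i.2

end IsSingleCycle

/-- The incidence equations and inequalities satisfied by a triangulation whose 1-skeleton is `K₈`
minus one edge `ab`, the link of `a` being the hexagon `v 0, …, v 5`. The six families indicate
faces: `c i = [b, v i, v (i + 1)]`, `s i = [b, v i, v (i + 2)]`, `l i = [b, v i, v (i + 3)]` join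
`b` to a side, a short diagonal or a long diagonal of the hexagon, and the faces with three hexagon
vertices are `p i = [v i, v (i + 1), v (i + 3)]`, `q i = [v i, v (i + 1), v (i + 4)]` and
`t i = [v i, v (i + 2), v (i + 4)]`. -/
structure HexagonCounts (c s l p q t : Fin 6 → ℕ) : Prop where
  side : ∀ i, c i + p i + q i = 1
  short : ∀ i, s i + t i + q (i + 2) + p (i + 5) = 2
  long : ∀ i, l i + p i + q (i + 2) + p (i + 3) + q (i + 5) = 2
  degree : ∀ i, c i + c (i + 5) + s i + s (i + 4) + l i = 2
  long_symm : ∀ i, l (i + 3) = l i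
  long_le_one : ∀ i, l i ≤ 1
  triple_symm : ∀ i, t (i + 2) = t i
  triple_le_one : ∀ i, t i ≤ 1
  side_add_side_le : ∀ i, c i + c (i + 5) ≤ 1
  short_cycle_le : ∀ i, s i + s (i + 2) + s (i + 4) ≤ 2
  left_cycle_le : ∀ i, s i + l (i + 2) + c (i + 5) ≤ 2
  right_cycle_le : ∀ i, s i + c (i + 2) + l i ≤ 2
  triple_add_le : ∀ i, t i + s i + s (i + 2) ≤ 2

namespace HexagonCounts
variable {c s l p q t : Fin 6 → ℕ}

theorem rotate (h : HexagonCounts c s l p q t) (i : Fin 6) :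
    HexagonCounts (fun j => c (i + j)) (fun j => s (i + j)) (fun j => l (i + j))
      (fun j => p (i + j)) (fun j => q (i + j)) (fun j => t (i + j)) where
  side j := h.side (i + j)
  short j := by simpa only [add_assoc] using h.short (i + j)
  long j := by simpa only [add_assoc] using h.long (i + j)
  degree j := by simpa only [add_assoc] using h.degree (i + j)
  long_symm j := by simpa only [add_assoc] using h.long_symm (i + j)
  long_le_one j := h.long_le_one (i + j)
  triple_symm j := by simpa only [add_assoc] using h.triple_symm (i + j)
  triple_le_one j := h.triple_le_one (i + j)
  side_add_side_le j := by simpa only [add_assoc] using h.side_add_side_le (i + j)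
  short_cycle_le j := by simpa only [add_assoc] using h.short_cycle_le (i + j)
  left_cycle_le j := by simpa only [add_assoc] using h.left_cycle_le (i + j)
  right_cycle_le j := by simpa only [add_assoc] using h.right_cycle_le (i + j)
  triple_add_le j := by simpa only [add_assoc] using h.triple_add_le (i + j)

theorem sums_eq (h : HexagonCounts c s l p q t) :
    ∑ i, l i = 2 * ∑ i, c i ∧ ∑ i, s i + 2 * ∑ i, c i = 6 ∧ ∑ i, t i = 3 * ∑ i, c i := by
  have shift (f : Fin 6 → ℕ) (k : Fin 6) : ∑ i, f (i + k) = ∑ i, f i :=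
    Equiv.sum_comp (Equiv.addRight k) f
  have side := Fintype.sum_congr _ _ h.side
  have short := Fintype.sum_congr _ _ h.short
  have long := Fintype.sum_congr _ _ h.long
  have degree := Fintype.sum_congr _ _ h.degree
  simp only [Finset.sum_add_distrib, shift, Finset.sum_const, Finset.card_univ, Fintype.card_fin,
    smul_eq_mul] at side short long degree
  omega

theorem sum_long (h : HexagonCounts c s l p q t) : ∑ i, l i = 2 * (l 0 + l 1 + l 2) := by
  have l3 : l 3 = l 0 := h.long_symm 0
  have l4 : l 4 = l 1 := h.long_symm 1
  have l5 : l 5 = l 2 := h.long_symm 2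
  rw [Fin.sum_univ_six]
  omega

theorem sum_triple (h : HexagonCounts c s l p q t) : ∑ i, t i = 3 * (t 0 + t 1) := by
  have t2 : t 2 = t 0 := h.triple_symm 0
  have t3 : t 3 = t 1 := h.triple_symm 1
  have t4 : t 4 = t 2 := h.triple_symm 2
  have t5 : t 5 = t 3 := h.triple_symm 3
  rw [Fin.sum_univ_six]
  omega

theorem short_sum_le_one (h : HexagonCounts c s l p q t) {i : Fin 6} (hi : t i = 1) :
    s i + s (i + 2) + s (i + 4) ≤ 1 := by
  have h0 := h.triple_add_le i
  have h2 := h.triple_add_le (i + 2)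
  have h4 := h.triple_add_le (i + 4)
  have t2 := h.triple_symm i
  have t4 := h.triple_symm (i + 2)
  simp only [add_assoc, Fin.reduceAdd, add_zero] at h2 h4 t4
  omega

theorem triple_eq_one (h : HexagonCounts c s l p q t) : t 0 = 1 ∧ t 1 = 1 := by
  obtain ⟨-, hs, ht⟩ := h.sums_eq
  rw [h.sum_triple] at ht
  rw [Fin.sum_univ_six] at hs
  have even_le : s 0 + s 2 + s 4 ≤ 2 := h.short_cycle_le 0
  have odd_le : s 1 + s 3 + s 5 ≤ 2 := h.short_cycle_le 1
  have even_le_one : t 0 = 1 → s 0 + s 2 + s 4 ≤ 1 := h.short_sum_le_one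
  have odd_le_one : t 1 = 1 → s 1 + s 3 + s 5 ≤ 1 := h.short_sum_le_one
  have := h.triple_le_one 0
  have := h.triple_le_one 1
  omega

theorem short_sums_eq_one (h : HexagonCounts c s l p q t) :
    s 0 + s 2 + s 4 = 1 ∧ s 1 + s 3 + s 5 = 1 ∧ l 0 + l 1 + l 2 = 2 := by
  obtain ⟨t0, t1⟩ := h.triple_eq_one
  obtain ⟨hl, hs, ht⟩ := h.sums_eq
  have even_le : s 0 + s 2 + s 4 ≤ 1 := h.short_sum_le_one t0
  have odd_le : s 1 + s 3 + s 5 ≤ 1 := h.short_sum_le_one t1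
  rw [h.sum_long] at hl
  rw [h.sum_triple] at ht
  rw [Fin.sum_univ_six] at hs
  omega

theorem short_zero_eq_zero (h : HexagonCounts c s l p q t) : s 0 = 0 := by
  by_contra s0
  obtain ⟨t0, t1⟩ := h.triple_eq_one
  obtain ⟨hA, hB, hL⟩ := h.short_sums_eq_one
  have l3 : l 3 = l 0 := h.long_symm 0
  have l4 : l 4 = l 1 := h.long_symm 1
  have l5 : l 5 = l 2 := h.long_symm 2
  have degree1 : c 1 + c 0 + s 1 + s 5 + l 1 = 2 := h.degree 1
  have degree2 : c 2 + c 1 + s 2 + s 0 + l 2 = 2 := h.degree 2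
  have degree3 : c 3 + c 2 + s 3 + s 1 + l 3 = 2 := h.degree 3
  have l1 : l 1 = 1 := by
    have degree4 : c 4 + c 3 + s 4 + s 2 + l 4 = 2 := h.degree 4
    have : c 4 + c 3 ≤ 1 := h.side_add_side_le 4
    have := h.long_le_one 1
    omega
  -- `s 0` is the only even short diagonal at `b`; split on the position of the only odd one.
  obtain s1 | s3 | s5 : s 1 = 1 ∨ s 3 = 1 ∨ s 5 = 1 := by omega
  · have l2 : l 2 = 1 := by
      have degree5 : c 5 + c 4 + s 5 + s 3 + l 5 = 2 := h.degree 5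
      have : c 5 + c 4 ≤ 1 := h.side_add_side_le 5
      have := h.long_le_one 2
      omega
    have degree0 : c 0 + c 5 + s 0 + s 4 + l 0 = 2 := h.degree 0
    have : s 0 + l 2 + c 5 ≤ 2 := h.left_cycle_le 0
    omega
  · have c2 : c 2 = 1 := by
      have side2 : c 2 + p 2 + q 2 = 1 := h.side 2
      have short0 : s 0 + t 0 + q 2 + p 5 = 2 := h.short 0
      have short3 : s 3 + t 3 + q 5 + p 2 = 2 := h.short 3
      have t3 : t 3 = t 1 := h.triple_symm 1
      omega
    omega
  · have l0 : l 0 = 1 := by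
      have : c 3 + c 2 ≤ 1 := h.side_add_side_le 3
      have := h.long_le_one 0
      omega
    have : s 0 + c 2 + l 0 ≤ 2 := h.right_cycle_le 0
    omega

theorem false (h : HexagonCounts c s l p q t) : False := by
  have sum_eq_one := h.short_sums_eq_one.1
  have s0 : s 0 = 0 := h.short_zero_eq_zero
  have s2 : s 2 = 0 := (h.rotate 2).short_zero_eq_zero
  have s4 : s 4 = 0 := (h.rotate 4).short_zero_eq_zero
  omega

end HexagonCounts

namespace CombClosedSurface

variable {V : Type*} [DecidableEq V] [Fintype V] (S : CombClosedSurface V)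

/-- The Euler characteristic `f₀ - f₁ + f₂`. -/
def eulerChar : ℤ :=
  (Fintype.card V : ℤ) - S.edgeSet.card + S.faces.card

/-- The link of `v`, as a graph on all of `V`; its support is the set of neighbours of `v` in the
1-skeleton. -/
def link (v : V) : SimpleGraph V :=
  SimpleGraph.fromRel fun x y => {v, x, y} ∈ S.faces

/-- The `0`-`1` indicator of `{x, y, z}` being a face, which turns incidences into linear
equations. It vanishes when two of the vertices coincide. -/
def faceIndicator (x y z : V) : ℕ :=
  if {x, y, z} ∈ S.faces then 1 else 0

variable {S} {v w x y z : V}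

theorem ne_of_mem_faces (h : {x, y, z} ∈ S.faces) : x ≠ y ∧ x ≠ z ∧ y ≠ z := by
  have hcard := S.face_card _ h
  refine ⟨?_, ?_, ?_⟩ <;> rintro rfl <;> simp only [Finset.mem_singleton, Finset.mem_insert,
    Finset.insert_eq_of_mem, true_or, or_true] at hcard
  all_goals exact absurd hcard (Finset.card_le_two.trans_lt (by norm_num)).ne

theorem link_adj : (S.link v).Adj x y ↔ {v, x, y} ∈ S.faces := by
  rw [link, SimpleGraph.fromRel_adj, Finset.pair_comm y x, or_self, and_iff_right_iff_imp]
  exact fun h => (ne_of_mem_faces h).2.2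

theorem exists_eq_of_mem_of_mem {t : Finset V} (ht : t ∈ S.faces) (hx : x ∈ t) (hy : y ∈ t)
    (hxy : x ≠ y) : ∃ z, t = {x, y, z} := by
  obtain ⟨z, -, rfl⟩ := Finset.exists_eq_insert_iff.2
    ⟨Finset.insert_subset hx (Finset.singleton_subset_iff.2 hy),
      by rw [Finset.card_pair hxy, S.face_card t ht]⟩
  exact ⟨z, by rw [Finset.insert_comm, Finset.pair_comm z y]⟩

theorem mem_support_link :
    y ∈ (S.link x).support ↔ y ≠ x ∧ ∃ t ∈ S.faces, x ∈ t ∧ y ∈ t := by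
  simp only [SimpleGraph.mem_support, link_adj]
  constructor
  · rintro ⟨z, hz⟩
    exact ⟨(ne_of_mem_faces hz).1.symm, _, hz, by simp, by simp⟩
  · rintro ⟨hyx, t, ht, hxt, hyt⟩
    obtain ⟨z, rfl⟩ := exists_eq_of_mem_of_mem ht hxt hyt hyx.symm
    exact ⟨z, ht⟩

theorem pair_mem_edgeSet : {x, y} ∈ S.edgeSet ↔ y ∈ (S.link x).support := by
  rw [edgeSet, Finset.mem_filter, Finset.mem_powersetCard_univ, mem_support_link, ne_comm]
  simp only [Finset.insert_subset_iff, Finset.singleton_subset_iff]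
  exact and_congr_left fun _ => Finset.card_pair_eq_two_iff

theorem isCycles_link (S : CombClosedSurface V) (v : V) : (S.link v).IsCycles := by
  rintro x ⟨y, hxy⟩
  have hxy : {v, x, y} ∈ S.faces := link_adj.1 hxy
  have hvx : v ≠ x := (ne_of_mem_faces hxy).1
  have himage : (fun y => ({v, x, y} : Finset V)) '' (S.link v).neighborSet x =
      (S.faces.filter fun t => {v, x} ⊆ t : Finset (Finset V)) := by
    ext t
    simp only [Set.mem_image, SimpleGraph.mem_neighborSet, link_adj, Finset.coe_filter,
      Set.mem_ofPred_eq]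
    constructor
    · rintro ⟨z, hz, rfl⟩
      exact ⟨hz, by simp [Finset.insert_subset_iff]⟩
    · rintro ⟨ht, hsub⟩
      obtain ⟨z, rfl⟩ := exists_eq_of_mem_of_mem ht (hsub (by simp)) (hsub (by simp)) hvx
      exact ⟨z, ht, rfl⟩
  have hinj : Set.InjOn (fun y => ({v, x, y} : Finset V)) ((S.link v).neighborSet x) := by
    intro z hz z' _ heq
    have hz := ne_of_mem_faces (link_adj.1 hz)
    have : z ∈ ({v, x, z'} : Finset V) := by
      rw [← show ({v, x, z} : Finset V) = {v, x, z'} from heq]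
      simp
    simpa [hz.2.1.symm, hz.2.2.symm] using this
  rw [← hinj.ncard_image, himage, Set.ncard_coe_finset]
  exact S.edge_in_two_faces {v, x} (Finset.card_pair hvx)
    ⟨_, hxy, by simp [Finset.insert_subset_iff]⟩

theorem isSingleCycle_link (S : CombClosedSurface V) (v : V) : IsSingleCycle (S.link v) where
  isCycles := S.isCycles_link v
  reachable x hx y hy :=
    ((S.link_connected v).preconnected ⟨x, mem_support_link.1 hx⟩
      ⟨y, mem_support_link.1 hy⟩).map (SimpleGraph.Embedding.induce _).toHom

theorem faceIndicator_comm (S : CombClosedSurface V) (x y z : V) :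
    S.faceIndicator x y z = S.faceIndicator x z y := by
  rw [faceIndicator, faceIndicator, Finset.pair_comm]

theorem faceIndicator_left_comm (S : CombClosedSurface V) (x y z : V) :
    S.faceIndicator x y z = S.faceIndicator y x z := by
  rw [faceIndicator, faceIndicator, Finset.insert_comm]

theorem faceIndicator_le_one (S : CombClosedSurface V) (x y z : V) : S.faceIndicator x y z ≤ 1 := by
  unfold faceIndicator
  split_ifs <;> simp

theorem faceIndicator_eq_one : S.faceIndicator x y z = 1 ↔ (S.link x).Adj y z := by
  rw [link_adj, faceIndicator, ite_eq_left_iff]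
  simp

theorem faceIndicator_self_right : S.faceIndicator x y y = 0 := by
  have := S.faceIndicator_le_one x y y
  have := mt (faceIndicator_eq_one (S := S)).1 ((S.link x).irrefl (v := y))
  omega

theorem faceIndicator_self_left : S.faceIndicator x x y = 0 := by
  rw [faceIndicator_comm, faceIndicator_left_comm, faceIndicator_self_right]

theorem sum_faceIndicator (h : y ∈ (S.link x).support) : ∑ z, S.faceIndicator x y z = 2 := by
  classical
  rw [← S.isCycles_link x h]
  simp only [faceIndicator, Finset.sum_boole, ← link_adj]
  rw [Nat.cast_id, Set.ncard_eq_toFinset_card']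
  congr 1
  ext z
  simp

theorem faceIndicator_triangle_le (h : 4 ≤ (S.link w).support.ncard) (x y z : V) :
    S.faceIndicator w x y + S.faceIndicator w y z + S.faceIndicator w z x ≤ 2 := by
  by_contra! hlt
  have := S.faceIndicator_le_one w x y
  have := S.faceIndicator_le_one w y z
  have := S.faceIndicator_le_one w z x
  obtain ⟨hxy, hyz, hzx⟩ : S.faceIndicator w x y = 1 ∧ S.faceIndicator w y z = 1 ∧
      S.faceIndicator w z x = 1 := by omega
  rw [faceIndicator_eq_one] at hxy hyz hzx
  exact absurd ((S.isSingleCycle_link w).ncard_support_le_three hxy hyz hzx) (by omega)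

theorem faceIndicator_square_le (h : 5 ≤ (S.link v).support.ncard) (hwy : w ≠ y) (hxz : x ≠ z) :
    S.faceIndicator v w x + S.faceIndicator v x y + S.faceIndicator v y z +
      S.faceIndicator v z w ≤ 3 := by
  by_contra! hlt
  have := S.faceIndicator_le_one v w x
  have := S.faceIndicator_le_one v x y
  have := S.faceIndicator_le_one v y z
  have := S.faceIndicator_le_one v z w
  obtain ⟨hwx, hxy, hyz, hzw⟩ : S.faceIndicator v w x = 1 ∧ S.faceIndicator v x y = 1 ∧
      S.faceIndicator v y z = 1 ∧ S.faceIndicator v z w = 1 := by omega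
  rw [faceIndicator_eq_one] at hwx hxy hyz hzw
  exact absurd ((S.isSingleCycle_link v).ncard_support_le_four hwy hxz hwx hxy hyz hzw) (by omega)

theorem edgeSet_subset_powersetCard (S : CombClosedSurface V) :
    S.edgeSet ⊆ Finset.powersetCard 2 Finset.univ :=
  Finset.filter_subset _ _

theorem card_edgeSet_le (S : CombClosedSurface V) :
    S.edgeSet.card ≤ (Fintype.card V).choose 2 := by
  simpa only [Finset.card_powersetCard, Finset.card_univ] using
    Finset.card_le_card S.edgeSet_subset_powersetCard

theorem card_faces_mul_three (S : CombClosedSurface V) :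
    S.faces.card * 3 = S.edgeSet.card * 2 := by
  refine Finset.card_mul_eq_card_mul (fun t e => e ⊆ t) (fun t ht => ?_) fun e he => ?_
  · have habove : S.edgeSet.bipartiteAbove (fun t e => e ⊆ t) t = t.powersetCard 2 := by
      ext e
      simp only [Finset.mem_bipartiteAbove, edgeSet, Finset.mem_filter,
        Finset.mem_powersetCard]
      exact ⟨fun h => ⟨h.2, h.1.1.2⟩, fun h => ⟨⟨⟨e.subset_univ, h.2⟩, t, ht, h.1⟩, h.1⟩⟩
    rw [habove, Finset.card_powersetCard, S.face_card t ht]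
    rfl
  · obtain ⟨hcard, hface⟩ := Finset.mem_filter.1 he
    exact S.edge_in_two_faces e (Finset.mem_powersetCard_univ.1 hcard) hface

theorem heawood_inequality (S : CombClosedSurface V) :
    -6 * S.eulerChar ≤ Fintype.card V * (Fintype.card V - 7 : ℤ) := by
  have hfaces : (S.faces.card * 3 : ℤ) = S.edgeSet.card * 2 := mod_cast S.card_faces_mul_three
  have hedges : (S.edgeSet.card : ℚ) ≤ Fintype.card V * (Fintype.card V - 1 : ℚ) / 2 := by
    rw [← Nat.cast_choose_two]
    exact mod_cast S.card_edgeSet_le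
  rw [le_div_iff₀ two_pos] at hedges
  have hedges' : (S.edgeSet.card * 2 : ℤ) ≤ Fintype.card V * (Fintype.card V - 1 : ℤ) :=
    mod_cast hedges
  unfold eulerChar
  linarith

variable {a b : V}

/-- The 1-skeleton is the complete graph minus the single edge `ab`. -/
structure IsUniqueNonedge (S : CombClosedSurface V) (a b : V) : Prop where
  ne : a ≠ b
  mem_support_link_iff : ∀ {x y}, y ∈ (S.link x).support ↔ x ≠ y ∧ s(x, y) ≠ s(a, b)

theorem exists_isUniqueNonedge (h : S.edgeSet.card + 1 = (Fintype.card V).choose 2) :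
    ∃ a b, S.IsUniqueNonedge a b := by
  have hcard : (Finset.powersetCard 2 Finset.univ \ S.edgeSet).card = 1 := by
    rw [Finset.card_sdiff_of_subset S.edgeSet_subset_powersetCard,
      Finset.card_powersetCard, Finset.card_univ]
    omega
  obtain ⟨e, he⟩ := Finset.card_eq_one.1 hcard
  have he_card : e.card = 2 := by
    have : e ∈ Finset.powersetCard 2 Finset.univ \ S.edgeSet := by simp [he]
    exact Finset.mem_powersetCard_univ.1 (Finset.mem_sdiff.1 this).1
  obtain ⟨a, b, hab, rfl⟩ := Finset.card_eq_two.1 he_card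
  refine ⟨a, b, hab, fun {x y} => ?_⟩
  have hxy := Finset.ext_iff.1 he {x, y}
  rw [Finset.mem_sdiff, Finset.mem_powersetCard_univ, Finset.card_pair_eq_two_iff,
    Finset.mem_singleton, pair_mem_edgeSet] at hxy
  have hne : y ∈ (S.link x).support → x ≠ y := fun h => (mem_support_link.1 h).1.symm
  have hpair : ({x, y} : Finset V) = {a, b} ↔ s(x, y) = s(a, b) := by
    rw [← Finset.coe_inj, Finset.coe_pair, Finset.coe_pair, Set.pair_eq_pair_iff, Sym2.eq_iff]
  rw [hpair] at hxy
  tauto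

theorem exists_isUniqueNonedge_of_eulerChar_neg (hχ : S.eulerChar < 0)
    (hV : Fintype.card V ≤ 8) : Fintype.card V = 8 ∧ ∃ a b, S.IsUniqueNonedge a b := by
  have heawood := S.heawood_inequality
  have hV8 : Fintype.card V = 8 := by
    by_contra hne
    have : (Fintype.card V * (Fintype.card V - 7 : ℤ)) ≤ 0 :=
      mul_nonpos_of_nonneg_of_nonpos (by omega) (by omega)
    omega
  refine ⟨hV8, exists_isUniqueNonedge ?_⟩
  have hχ_eq : S.eulerChar = -1 := by
    rw [hV8] at heawood
    omega
  have hfaces := S.card_faces_mul_three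
  rw [eulerChar, hV8] at hχ_eq
  rw [hV8, Nat.choose_two_right]
  omega

namespace IsUniqueNonedge

theorem symm (h : S.IsUniqueNonedge a b) : S.IsUniqueNonedge b a where
  ne := h.ne.symm
  mem_support_link_iff := by
    rw [Sym2.eq_swap (a := b)]
    exact h.mem_support_link_iff

theorem support_link_left (h : S.IsUniqueNonedge a b) : (S.link a).support = {a, b}ᶜ := by
  ext x
  rw [h.mem_support_link_iff, ne_eq s(a, x), Sym2.congr_right, ne_comm, Set.mem_compl_iff,
    Set.mem_insert_iff, Set.mem_singleton_iff, not_or]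

theorem support_link_of_ne (h : S.IsUniqueNonedge a b) (hxa : x ≠ a) (hxb : x ≠ b) :
    (S.link x).support = {x}ᶜ := by
  ext y
  rw [h.mem_support_link_iff, Set.mem_compl_iff, Set.mem_singleton_iff, ne_comm]
  simp [hxa, hxb]

theorem ncard_support_link_left (h : S.IsUniqueNonedge a b) :
    (S.link a).support.ncard + 2 = Fintype.card V := by
  rw [h.support_link_left, ← Set.ncard_pair h.ne, add_comm, Set.ncard_add_ncard_compl,
    Nat.card_eq_fintype_card]

theorem le_ncard_support_link (h : S.IsUniqueNonedge a b) (x : V) :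
    Fintype.card V ≤ (S.link x).support.ncard + 2 := by
  by_cases hxa : x = a
  · exact hxa ▸ h.ncard_support_link_left.ge
  by_cases hxb : x = b
  · exact hxb ▸ h.symm.ncard_support_link_left.ge
  rw [h.support_link_of_ne hxa hxb, ← Nat.card_eq_fintype_card,
    ← Set.ncard_add_ncard_compl {x}, Set.ncard_singleton]
  omega

theorem faceIndicator_eq_zero (h : S.IsUniqueNonedge a b) (x : V) :
    S.faceIndicator a b x = 0 := by
  rw [faceIndicator, if_neg]
  intro hface
  have hb : b ∈ (S.link a).support := ⟨x, link_adj.2 hface⟩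
  simp [h.support_link_left] at hb

end IsUniqueNonedge

/-- The link of `a` is the hexagon `v 0, …, v 5`, and `b` is the only other vertex. -/
structure IsHexagon (S : CombClosedSurface V) (a b : V) (v : Fin 6 → V) : Prop
    extends IsUniqueNonedge S a b where
  injective : v.Injective
  range_eq : Set.range v = {a, b}ᶜ
  adj : ∀ i, (S.link a).Adj (v i) (v (i + 1))

theorem IsUniqueNonedge.exists_isHexagon (h : S.IsUniqueNonedge a b) (hV : Fintype.card V = 8) :
    ∃ v, S.IsHexagon a b v := by
  have hcard : (S.link a).support.ncard = 6 := by
    have := h.ncard_support_link_left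
    omega
  obtain ⟨v, hinj, hrange, hadj⟩ := (S.isSingleCycle_link a).exists_cyclic_enumeration hcard
  exact ⟨v, h, hinj, hrange.trans h.support_link_left, hadj⟩

namespace IsHexagon

variable {v : Fin 6 → V}

theorem apply_ne_left (h : S.IsHexagon a b v) (i : Fin 6) : v i ≠ a := by
  rintro rfl
  simpa [h.range_eq] using Set.mem_range_self (f := v) i

theorem apply_ne_right (h : S.IsHexagon a b v) (i : Fin 6) : v i ≠ b := by
  rintro rfl
  simpa [h.range_eq] using Set.mem_range_self (f := v) i

theorem apply_ne_apply_add (h : S.IsHexagon a b v) (i : Fin 6) {k : Fin 6} (hk : k ≠ 0) :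
    v i ≠ v (i + k) :=
  h.injective.ne (by simpa using hk)

theorem sum_eq (h : S.IsHexagon a b v) (f : V → ℕ) (i : Fin 6) :
    ∑ x, f x = f a + f b + (f (v i) + f (v (i + 1)) + f (v (i + 2)) + f (v (i + 3)) +
      f (v (i + 4)) + f (v (i + 5))) := by
  have himage : Finset.univ.image v = ({a, b} : Finset V)ᶜ := by
    rw [← Finset.coe_inj, Finset.coe_image, Finset.coe_univ, Set.image_univ, Finset.coe_compl,
      Finset.coe_pair, h.range_eq]
  have hrotate : ∑ j, f (v (i + j)) = ∑ j, f (v j) :=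
    Equiv.sum_comp (Equiv.addLeft i) fun j => f (v j)
  rw [← Finset.sum_add_sum_compl {a, b}, Finset.sum_pair h.ne, ← himage,
    Finset.sum_image h.injective.injOn, ← hrotate, Fin.sum_univ_six, add_zero]

theorem sum_faceIndicator_eq_two (h : S.IsHexagon a b v) {x y : V}
    (hy : y ∈ (S.link x).support) (i : Fin 6) :
    S.faceIndicator x y a + S.faceIndicator x y b + (S.faceIndicator x y (v i) +
      S.faceIndicator x y (v (i + 1)) + S.faceIndicator x y (v (i + 2)) +
      S.faceIndicator x y (v (i + 3)) + S.faceIndicator x y (v (i + 4)) +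
      S.faceIndicator x y (v (i + 5))) = 2 := by
  rw [← h.sum_eq, sum_faceIndicator hy]

theorem apply_mem_support_link (h : S.IsHexagon a b v) (i : Fin 6) {k : Fin 6} (hk : k ≠ 0) :
    v (i + k) ∈ (S.link (v i)).support := by
  rw [h.support_link_of_ne (h.apply_ne_left i) (h.apply_ne_right i)]
  exact (h.apply_ne_apply_add i hk).symm

theorem apply_mem_support_link_left (h : S.IsHexagon a b v) (i : Fin 6) :
    v i ∈ (S.link a).support :=
  ⟨_, h.adj i⟩

theorem apply_mem_support_link_right (h : S.IsHexagon a b v) (i : Fin 6) :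
    v i ∈ (S.link b).support := by
  rw [h.symm.support_link_left]
  simp [h.apply_ne_left i, h.apply_ne_right i]

theorem faceIndicator_apex_side (h : S.IsHexagon a b v) (i : Fin 6) :
    S.faceIndicator a (v i) (v (i + 1)) = 1 :=
  faceIndicator_eq_one.2 (h.adj i)

theorem faceIndicator_apex_side_prev (h : S.IsHexagon a b v) (i : Fin 6) :
    S.faceIndicator a (v i) (v (i + 5)) = 1 := by
  have := h.faceIndicator_apex_side (i + 5)
  simpa only [add_assoc, Fin.reduceAdd, add_zero, faceIndicator_comm S a (v (i + 5))] using this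

theorem faceIndicator_apex_diagonal (h : S.IsHexagon a b v) (i : Fin 6) :
    S.faceIndicator a (v i) (v (i + 2)) = 0 ∧ S.faceIndicator a (v i) (v (i + 3)) = 0 ∧
      S.faceIndicator a (v i) (v (i + 4)) = 0 := by
  have := h.sum_faceIndicator_eq_two (h.apply_mem_support_link_left i) i
  have := h.faceIndicator_apex_side i
  have := h.faceIndicator_apex_side_prev i
  omega

theorem six_le_ncard_support_link (h : S.IsHexagon a b v) (x : V) :
    6 ≤ (S.link x).support.ncard := by
  have hleft := h.ncard_support_link_left
  have hle := h.le_ncard_support_link x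
  rw [h.support_link_left, ← h.range_eq, Set.ncard_range_of_injective h.injective,
    Nat.card_fin] at hleft
  omega

theorem triangle_le (h : S.IsHexagon a b v) (w x y z : V) :
    S.faceIndicator w x y + S.faceIndicator w y z + S.faceIndicator w z x ≤ 2 :=
  faceIndicator_triangle_le ((h.six_le_ncard_support_link w).trans' (by norm_num)) x y z

theorem faceIndicator_consecutive (h : S.IsHexagon a b v) (i : Fin 6) :
    S.faceIndicator (v i) (v (i + 1)) (v (i + 2)) = 0 := by
  have htriangle := h.triangle_le (v (i + 1)) a (v i) (v (i + 2))
  have hside := h.faceIndicator_apex_side i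
  have hside' := h.faceIndicator_apex_side (i + 1)
  -- The two commutativity lemmas sort the vertices of every face into a normal form.
  simp only [add_assoc, Fin.reduceAdd, faceIndicator_comm, faceIndicator_left_comm]
    at htriangle hside hside' ⊢
  omega

theorem side_sum (h : S.IsHexagon a b v) (i : Fin 6) :
    S.faceIndicator b (v i) (v (i + 1)) + S.faceIndicator (v i) (v (i + 1)) (v (i + 3)) +
      S.faceIndicator (v i) (v (i + 1)) (v (i + 4)) = 1 := by
  have hsum := h.sum_faceIndicator_eq_two (h.apply_mem_support_link i (k := 1) (by decide)) i
  have hapex := h.faceIndicator_apex_side i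
  have hnext := h.faceIndicator_consecutive i
  have hprev := h.faceIndicator_consecutive (i + 5)
  simp only [add_assoc, Fin.reduceAdd, add_zero, faceIndicator_comm, faceIndicator_left_comm,
    faceIndicator_self_left, faceIndicator_self_right] at hsum hapex hnext hprev ⊢
  omega

theorem short_sum (h : S.IsHexagon a b v) (i : Fin 6) :
    S.faceIndicator b (v i) (v (i + 2)) + S.faceIndicator (v i) (v (i + 2)) (v (i + 4)) +
      S.faceIndicator (v (i + 2)) (v (i + 2 + 1)) (v (i + 2 + 4)) +
      S.faceIndicator (v (i + 5)) (v (i + 5 + 1)) (v (i + 5 + 3)) = 2 := by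
  have hsum := h.sum_faceIndicator_eq_two (h.apply_mem_support_link i (k := 2) (by decide)) i
  have hapex := (h.faceIndicator_apex_diagonal i).1
  have hmiddle := h.faceIndicator_consecutive i
  simp only [add_assoc, Fin.reduceAdd, add_zero, faceIndicator_comm, faceIndicator_left_comm,
    faceIndicator_self_left, faceIndicator_self_right] at hsum hapex hmiddle ⊢
  omega

theorem long_sum (h : S.IsHexagon a b v) (i : Fin 6) :
    S.faceIndicator b (v i) (v (i + 3)) + S.faceIndicator (v i) (v (i + 1)) (v (i + 3)) +
      S.faceIndicator (v (i + 2)) (v (i + 2 + 1)) (v (i + 2 + 4)) +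
      S.faceIndicator (v (i + 3)) (v (i + 3 + 1)) (v (i + 3 + 3)) +
      S.faceIndicator (v (i + 5)) (v (i + 5 + 1)) (v (i + 5 + 4)) = 2 := by
  have hsum := h.sum_faceIndicator_eq_two (h.apply_mem_support_link i (k := 3) (by decide)) i
  have hapex := (h.faceIndicator_apex_diagonal i).2.1
  simp only [add_assoc, Fin.reduceAdd, add_zero, faceIndicator_comm, faceIndicator_left_comm,
    faceIndicator_self_left, faceIndicator_self_right] at hsum hapex ⊢
  omega

theorem spoke_sum (h : S.IsHexagon a b v) (i : Fin 6) :
    S.faceIndicator b (v i) (v (i + 1)) + S.faceIndicator b (v (i + 5)) (v (i + 5 + 1)) +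
      S.faceIndicator b (v i) (v (i + 2)) + S.faceIndicator b (v (i + 4)) (v (i + 4 + 2)) +
      S.faceIndicator b (v i) (v (i + 3)) = 2 := by
  have hsum := h.sum_faceIndicator_eq_two (h.apply_mem_support_link_right i) i
  have hnonedge := h.faceIndicator_eq_zero (v i)
  simp only [add_assoc, Fin.reduceAdd, add_zero, faceIndicator_comm, faceIndicator_left_comm,
    faceIndicator_self_left, faceIndicator_self_right] at hsum hnonedge ⊢
  omega

theorem adjacent_sides_le (h : S.IsHexagon a b v) (i : Fin 6) :
    S.faceIndicator b (v i) (v (i + 1)) + S.faceIndicator b (v (i + 5)) (v (i + 5 + 1)) ≤ 1 := by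
  have hne : v (i + 1) ≠ v (i + 5) := h.injective.ne (by simp)
  have hsquare := faceIndicator_square_le (z := v (i + 5))
    ((h.six_le_ncard_support_link (v i)).trans' (by norm_num)) h.ne hne
  have hside := h.faceIndicator_apex_side i
  have hside' := h.faceIndicator_apex_side (i + 5)
  simp only [add_assoc, Fin.reduceAdd, add_zero, faceIndicator_comm, faceIndicator_left_comm]
    at hsquare hside hside' ⊢
  omega

theorem hexagonCounts (h : S.IsHexagon a b v) :
    HexagonCounts (fun i => S.faceIndicator b (v i) (v (i + 1)))
      (fun i => S.faceIndicator b (v i) (v (i + 2))) (fun i => S.faceIndicator b (v i) (v (i + 3)))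
      (fun i => S.faceIndicator (v i) (v (i + 1)) (v (i + 3)))
      (fun i => S.faceIndicator (v i) (v (i + 1)) (v (i + 4)))
      (fun i => S.faceIndicator (v i) (v (i + 2)) (v (i + 4))) where
  side := h.side_sum
  short := h.short_sum
  long := h.long_sum
  degree := h.spoke_sum
  long_symm i := by
    simp only [add_assoc, Fin.reduceAdd, add_zero, faceIndicator_comm]
  long_le_one _ := S.faceIndicator_le_one _ _ _
  triple_symm i := by
    simp only [add_assoc, Fin.reduceAdd, add_zero, faceIndicator_comm, faceIndicator_left_comm]
  triple_le_one _ := S.faceIndicator_le_one _ _ _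
  side_add_side_le := h.adjacent_sides_le
  short_cycle_le i := by
    have := h.triangle_le b (v i) (v (i + 2)) (v (i + 4))
    simpa only [add_assoc, Fin.reduceAdd, add_zero] using this
  left_cycle_le i := by
    have := h.triangle_le b (v i) (v (i + 2)) (v (i + 5))
    simpa only [add_assoc, Fin.reduceAdd, add_zero] using this
  right_cycle_le i := by
    have := h.triangle_le b (v i) (v (i + 2)) (v (i + 3))
    simpa only [add_assoc, Fin.reduceAdd, add_zero, faceIndicator_comm] using this
  triple_add_le i := by
    have := h.triangle_le (v (i + 2)) (v (i + 4)) (v i) b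
    simpa only [add_assoc, Fin.reduceAdd, faceIndicator_comm, faceIndicator_left_comm] using this

end IsHexagon

end CombClosedSurface

theorem genus3_nonorientable_vertex_bound_general {V : Type*} [DecidableEq V] [Fintype V]
    (S : CombClosedSurface V) (h_euler : S.eulerChar < 0) : 9 ≤ Fintype.card V := by
  by_contra! hlt
  obtain ⟨hV, a, b, hab⟩ :=
    CombClosedSurface.exists_isUniqueNonedge_of_eulerChar_neg h_euler (Nat.le_of_lt_succ hlt)
  obtain ⟨v, hv⟩ := hab.exists_isHexagon hV
  exact hv.hexagonCounts.false

/-- A triangulation of the non-orientable surface of genus `3`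
(the non-orientable closed surface with Euler characteristic `-1`) has at least `9`
vertices.  By the classification of closed surfaces, a connected combinatorial closed
surface which is non-orientable and has Euler characteristic `f₀ - f₁ + f₂ = -1`
triangulates `N₃`. -/
theorem genus3_nonorientable_vertex_bound {V : Type*} [DecidableEq V] [Fintype V]
    (S : CombClosedSurface V)
    (h_nonorientable : ¬ S.Orientable)
    (h_euler : (Fintype.card V : ℤ) - S.edgeSet.card + S.faces.card = -1) :
    9 ≤ Fintype.card V :=
  genus3_nonorientable_vertex_bound_general S (h_euler.trans_lt neg_one_lt_zero)
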